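/- arXiv:2011.13171 — 2 statements merged into one kernel-verified Lean document; each statement's English description precedes it below -/
import Mathlib

section
/- Let T : (ℕ → Bool) → (ℕ → Bool) be a continuous tossing process. For each finite word x : List Bool let P_x be the set of finite words y that are minimal with respect to the prefix order among those with I_y ⊆ T⁻¹(I_x). Then: each P_x is a prefix code and T⁻¹(I_x) = ⋃_{y ∈ P_x} I_y; P_x is ⪯-minimal among prefix codes P' with T⁻¹(I_x) = ⋃_{y ∈ P'} I_y; μ(⋃_{y ∈ P_x} I_y) = 2^(−|x|); the assignment x ↦ P_x is a coding function (P_ε = {ε}; if x, y are prefix-incomparable then P_x ∩ P_y = ∅; if x is a prefix of y then P_x ⪯ P_y); and it is exhaustive: for every exhaustive prefix code P, the set ⋃_{x ∈ P} P_x is an exhaustive prefix code. Moreover x ↦ P_x is the unique coding function with these properties. -/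
open MeasureTheory

/-- The cylinder determined by a finite binary word `x`: the set of infinite binary
sequences having `x` as a prefix. -/
def Cyl (x : List Bool) : Set (ℕ → Bool) := {α | ∀ i : Fin x.length, α i.1 = x.get i}

/-- The uniform Bernoulli(1/2) ("fair coin") measure on `Bool`. -/
noncomputable def coin : Measure Bool := (PMF.bernoulli 2⁻¹ (by norm_num)).toMeasure

/-- `μ` is the fair-coin measure on Cantor space: the product over `ℕ` of uniform
Bernoulli(1/2) measures, characterized by the fact that all finite-dimensional marginals
are finite products of `coin`. -/
def IsFairCoin (μ : Measure (ℕ → Bool)) : Prop :=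
  IsProjectiveLimit μ (fun J : Finset ℕ => Measure.pi fun _ : J => coin)

/-- A binary prefix code: a nonempty set of finite binary words, no element of which is a
proper prefix of another. -/
def IsPrefixCode (P : Set (List Bool)) : Prop :=
  P.Nonempty ∧ ∀ x ∈ P, ∀ y ∈ P, x <+: y → x = y

/-- `P ⪯ Q`: every element of `Q` extends (has as a prefix) some element of `P`. -/
def CodeLE (P Q : Set (List Bool)) : Prop := ∀ y ∈ Q, ∃ x ∈ P, x <+: y

/-- An exhaustive set of words: every infinite binary sequence has a prefix in it. -/
def IsExhaustiveCode (P : Set (List Bool)) : Prop := ∀ α : ℕ → Bool, ∃ x ∈ P, α ∈ Cyl x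

/-- A coding function: each `P x` is a prefix code, `P ε = {ε}`, prefix-incomparable
words get disjoint codes, and `x` a prefix of `y` implies `P x ⪯ P y`. -/
def IsCodingFunction (P : List Bool → Set (List Bool)) : Prop :=
  (∀ x, IsPrefixCode (P x)) ∧
  P [] = {[]} ∧
  (∀ x y : List Bool, ¬ x <+: y → ¬ y <+: x → P x ∩ P y = ∅) ∧
  ∀ x y : List Bool, x <+: y → CodeLE (P x) (P y)

/-- The canonical coding function of `T`: `minCode T x` is the set of words `y` that are
minimal in the prefix order among those with `I_y ⊆ T⁻¹ I_x`. -/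
def minCode (T : (ℕ → Bool) → ℕ → Bool) (x : List Bool) : Set (List Bool) :=
  {y | Cyl y ⊆ T ⁻¹' Cyl x ∧
    ∀ z : List Bool, z <+: y → Cyl z ⊆ T ⁻¹' Cyl x → z = y}

/-!
For an open set `U` of Cantor space, every word whose cylinder lies in `U` extends a shortest such
word, so the minimal ones form a `⪯`-least code with union `U`; as `⪯` is antisymmetric on prefix
codes, this code is unique. Everything is then a property of the open sets `T⁻¹ I_x`: disjointness
of cylinders is incomparability of words, and `T⁻¹` preserves disjointness, inclusion and covers.
A measure-preserving `T` has dense range, since nonempty open sets have positive measure, so no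
`T⁻¹ I_x` is empty.
-/

open Set

/-- The initial segment `α₀ α₁ ⋯ αₙ₋₁` of length `n` of an infinite binary sequence; it describes
the cylinders containing a given point. -/
def initWord (α : ℕ → Bool) (n : ℕ) : List Bool := (List.range n).map α

/-- The words that are minimal in the prefix order among those whose cylinder lies in `U`. This is
the code of `U`, and `minCode T x` is by definition the code of `T ⁻¹' Cyl x`. -/
def minimalWords (U : Set (ℕ → Bool)) : Set (List Bool) :=
  {y | Cyl y ⊆ U ∧ ∀ z : List Bool, z <+: y → Cyl z ⊆ U → z = y}

section Cylinders

variable {x y : List Bool} {α : ℕ → Bool}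

theorem mem_cyl_iff_getElem : α ∈ Cyl x ↔ ∀ i (h : i < x.length), α i = x[i] := by
  simp only [Cyl, mem_ofPred_eq, Fin.forall_iff, List.get_eq_getElem]

theorem mem_cyl_iff_initWord_eq : α ∈ Cyl x ↔ initWord α x.length = x := by
  simp [mem_cyl_iff_getElem, initWord, List.ext_getElem_iff]

theorem take_initWord (α : ℕ → Bool) {m n : ℕ} (h : m ≤ n) :
    (initWord α n).take m = initWord α m := by
  simp [initWord, ← List.map_take, h]

theorem cyl_initWord (α : ℕ → Bool) (n : ℕ) : Cyl (initWord α n) = PiNat.cylinder α n := by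
  ext β
  simp [mem_cyl_iff_getElem, initWord, PiNat.mem_cylinder_iff]

theorem cyl_nil : Cyl [] = univ := by
  simp [eq_univ_iff_forall, mem_cyl_iff_getElem]

theorem cyl_nonempty (x : List Bool) : (Cyl x).Nonempty :=
  ⟨fun i => x.getD i false, mem_cyl_iff_getElem.2 fun i h => by simp [h]⟩

theorem cyl_anti (h : x <+: y) : Cyl y ⊆ Cyl x := by
  intro α hα
  rw [mem_cyl_iff_initWord_eq] at hα ⊢
  rw [← take_initWord α h.length_le, hα, ← List.prefix_iff_eq_take.1 h]

theorem prefix_of_mem_cyl (hx : α ∈ Cyl x) (hy : α ∈ Cyl y) (h : x.length ≤ y.length) :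
    x <+: y := by
  rw [← mem_cyl_iff_initWord_eq.1 hx, ← take_initWord α h, mem_cyl_iff_initWord_eq.1 hy]
  exact List.take_prefix _ _

theorem disjoint_cyl_iff : Disjoint (Cyl x) (Cyl y) ↔ ¬ x <+: y ∧ ¬ y <+: x := by
  refine ⟨fun h => ⟨fun hxy => ?_, fun hyx => ?_⟩, fun ⟨hxy, hyx⟩ => ?_⟩
  · exact (cyl_nonempty y).ne_empty (h.eq_bot_of_ge (cyl_anti hxy))
  · exact (cyl_nonempty x).ne_empty (h.eq_bot_of_le (cyl_anti hyx))
  · refine Set.disjoint_left.2 fun α hx hy => ?_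
    rcases le_total x.length y.length with hle | hle
    · exact hxy (prefix_of_mem_cyl hx hy hle)
    · exact hyx (prefix_of_mem_cyl hy hx hle)

theorem isOpen_cyl (x : List Bool) : IsOpen (Cyl x) := by
  obtain ⟨α, hα⟩ := cyl_nonempty x
  rw [← mem_cyl_iff_initWord_eq.1 hα, cyl_initWord]
  exact PiNat.isOpen_cylinder _ α x.length

theorem exists_mem_cyl_subset {U : Set (ℕ → Bool)} (hU : IsOpen U) (hα : α ∈ U) :
    ∃ y, α ∈ Cyl y ∧ Cyl y ⊆ U := by
  obtain ⟨_, ⟨β, n, rfl⟩, hmem, hsub⟩ :=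
    (PiNat.isTopologicalBasis_cylinders fun _ : ℕ => Bool).exists_subset_of_mem_open hα hU
  exact ⟨initWord β n, by rwa [cyl_initWord], by rwa [cyl_initWord]⟩

end Cylinders

section MinimalWords

variable {U V : Set (ℕ → Bool)} {P Q : Set (List Bool)}

theorem IsPrefixCode.eq_of_codeLE (hP : IsPrefixCode P) (hQ : IsPrefixCode Q)
    (hPQ : CodeLE P Q) (hQP : CodeLE Q P) : P = Q := by
  have subset_of_codeLE {A B : Set (List Bool)} (hA : IsPrefixCode A)
      (hAB : CodeLE A B) (hBA : CodeLE B A) : A ⊆ B := by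
    intro a ha
    obtain ⟨b, hb, hba⟩ := hBA a ha
    obtain ⟨a', ha', hab⟩ := hAB b hb
    obtain rfl : a' = a := hA.2 a' ha' a ha (hab.trans hba)
    rwa [hab.eq_of_length_le hba.length_le]
  exact (subset_of_codeLE hP hPQ hQP).antisymm (subset_of_codeLE hQ hQP hPQ)

theorem exists_minimal_prefix {A : Type*} {p : List A → Prop} {l : List A} (hl : p l) :
    ∃ z, z <+: l ∧ p z ∧ ∀ w, w <+: z → p w → w = z := by
  obtain ⟨z, ⟨hzl, hz⟩, hmin⟩ := exists_minimalFor_of_wellFoundedLT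
    (fun z => z <+: l ∧ p z) List.length ⟨l, List.prefix_rfl, hl⟩
  exact ⟨z, hzl, hz, fun w hwz hw =>
    hwz.eq_of_length_le (hmin ⟨hwz.trans hzl, hw⟩ hwz.length_le)⟩

theorem exists_mem_minimalWords_prefix {y : List Bool} (hy : Cyl y ⊆ U) :
    ∃ z ∈ minimalWords U, z <+: y := by
  obtain ⟨z, hzy, hz⟩ := exists_minimal_prefix (p := fun z => Cyl z ⊆ U) hy
  exact ⟨z, hz, hzy⟩

theorem iUnion_cyl_minimalWords (hU : IsOpen U) : ⋃ y ∈ minimalWords U, Cyl y = U := by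
  refine (iUnion₂_subset fun y hy => hy.1).antisymm fun α hα => ?_
  obtain ⟨y, hαy, hy⟩ := exists_mem_cyl_subset hU hα
  obtain ⟨z, hz, hzy⟩ := exists_mem_minimalWords_prefix hy
  exact mem_biUnion hz (cyl_anti hzy hαy)

theorem isPrefixCode_minimalWords (hU : IsOpen U) (hne : U.Nonempty) :
    IsPrefixCode (minimalWords U) := by
  refine ⟨?_, fun u hu v hv huv => hv.2 u huv hu.1⟩
  rw [← iUnion_cyl_minimalWords hU] at hne
  obtain ⟨y, hy, -⟩ := nonempty_biUnion.1 hne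
  exact ⟨y, hy⟩

theorem codeLE_minimalWords (hP : ⋃ y ∈ P, Cyl y ⊆ U) : CodeLE (minimalWords U) P :=
  fun _ hy => exists_mem_minimalWords_prefix ((subset_biUnion_of_mem (u := Cyl) hy).trans hP)

theorem minimalWords_univ : minimalWords univ = {[]} := by
  ext y
  simp only [minimalWords, subset_univ, true_and, forall_const, mem_ofPred_eq, mem_singleton_iff]
  exact ⟨fun h => (h [] List.nil_prefix).symm, by rintro rfl z hz; exact List.prefix_nil.1 hz⟩

theorem not_prefix_of_mem_minimalWords (hUV : Disjoint U V) {u v : List Bool}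
    (hu : u ∈ minimalWords U) (hv : v ∈ minimalWords V) : ¬ u <+: v :=
  (disjoint_cyl_iff.1 (hUV.mono hu.1 hv.1)).1

theorem eq_minimalWords_of_codeLE (hP : IsPrefixCode P) (hPU : U = ⋃ y ∈ P, Cyl y)
    (hmin : ∀ Q, IsPrefixCode Q → U = ⋃ y ∈ Q, Cyl y → CodeLE P Q) : P = minimalWords U := by
  have hU : IsOpen U := hPU ▸ isOpen_biUnion fun y _ => isOpen_cyl y
  obtain ⟨y, hy⟩ := hP.1
  have hne : U.Nonempty :=
    (cyl_nonempty y).mono (hPU ▸ subset_biUnion_of_mem (u := Cyl) hy)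
  have hcode : IsPrefixCode (minimalWords U) := isPrefixCode_minimalWords hU hne
  exact hP.eq_of_codeLE hcode (hmin _ hcode (iUnion_cyl_minimalWords hU).symm)
    (codeLE_minimalWords hPU.ge)

end MinimalWords

section MinCode

variable {T : (ℕ → Bool) → ℕ → Bool}

theorem iUnion_cyl_minCode (hT : Continuous T) (x : List Bool) :
    ⋃ y ∈ minCode T x, Cyl y = T ⁻¹' Cyl x :=
  iUnion_cyl_minimalWords ((isOpen_cyl x).preimage hT)

theorem isPrefixCode_minCode (hT : Continuous T) (hd : DenseRange T) (x : List Bool) :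
    IsPrefixCode (minCode T x) :=
  isPrefixCode_minimalWords ((isOpen_cyl x).preimage hT)
    (hd.exists_mem_open (isOpen_cyl x) (cyl_nonempty x))

theorem not_prefix_of_mem_minCode {x y u v : List Bool} (hxy : ¬ x <+: y) (hyx : ¬ y <+: x)
    (hu : u ∈ minCode T x) (hv : v ∈ minCode T y) : ¬ u <+: v :=
  not_prefix_of_mem_minimalWords ((disjoint_cyl_iff.2 ⟨hxy, hyx⟩).preimage T) hu hv

theorem isCodingFunction_minCode (hT : Continuous T) (hd : DenseRange T) :
    IsCodingFunction (minCode T) := by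
  refine ⟨isPrefixCode_minCode hT hd, ?_, fun x y hxy hyx => ?_, fun x y hxy => ?_⟩
  · change minimalWords (T ⁻¹' Cyl []) = {[]}
    rw [cyl_nil, preimage_univ, minimalWords_univ]
  · exact eq_empty_of_forall_notMem fun u ⟨hu, hv⟩ =>
      not_prefix_of_mem_minCode hxy hyx hu hv List.prefix_rfl
  · exact codeLE_minimalWords
      ((iUnion_cyl_minCode hT y).trans_subset (preimage_mono (cyl_anti hxy)))

theorem isPrefixCode_biUnion_minCode (hT : Continuous T) (hd : DenseRange T)
    {P : Set (List Bool)} (hP : IsPrefixCode P) : IsPrefixCode (⋃ x ∈ P, minCode T x) := by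
  refine ⟨nonempty_biUnion.2 (hP.1.imp fun x hx => ⟨hx, (isPrefixCode_minCode hT hd x).1⟩), ?_⟩
  simp only [mem_iUnion₂]
  rintro u ⟨x, hx, hu⟩ v ⟨y, hy, hv⟩ huv
  obtain rfl : x = y := by
    by_contra hne
    exact not_prefix_of_mem_minCode (fun h => hne (hP.2 x hx y hy h))
      (fun h => hne (hP.2 y hy x hx h).symm) hu hv huv
  exact (isPrefixCode_minCode hT hd x).2 u hu v hv huv

theorem isExhaustiveCode_biUnion_minCode (hT : Continuous T) {P : Set (List Bool)}
    (hP : IsExhaustiveCode P) : IsExhaustiveCode (⋃ x ∈ P, minCode T x) := by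
  intro α
  obtain ⟨x, hx, hαx⟩ := hP (T α)
  have hα : α ∈ ⋃ y ∈ minCode T x, Cyl y := by rwa [iUnion_cyl_minCode hT]
  obtain ⟨y, hy, hαy⟩ := mem_iUnion₂.1 hα
  exact ⟨y, mem_biUnion hx hy, hαy⟩

end MinCode

section Measure

theorem coin_singleton (b : Bool) : coin {b} = 2⁻¹ := by
  rw [coin, PMF.toMeasure_apply_singleton _ _ (measurableSet_singleton b)]
  cases b <;> simp [PMF.bernoulli_apply]

instance : IsProbabilityMeasure coin := PMF.toMeasure.isProbabilityMeasure _

theorem cyl_eq_cylinder (x : List Bool) :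
    Cyl x = cylinder (α := fun _ : ℕ => Bool) (Finset.range x.length)
      (univ.pi fun i => {x.getD i false}) := by
  ext α
  simp +contextual [mem_cyl_iff_getElem]

theorem IsFairCoin.measure_cyl {μ : Measure (ℕ → Bool)} (hμ : IsFairCoin μ) (x : List Bool) :
    μ (Cyl x) = 2 ^ (-(x.length : ℤ)) := by
  rw [cyl_eq_cylinder, IsProjectiveLimit.measure_cylinder hμ _
    (.univ_pi fun _ => measurableSet_singleton _), Measure.pi_pi]
  simp [coin_singleton, ENNReal.zpow_neg, ENNReal.inv_pow]

theorem IsFairCoin.isOpenPosMeasure {μ : Measure (ℕ → Bool)} (hμ : IsFairCoin μ) :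
    μ.IsOpenPosMeasure := by
  refine ⟨fun U hU ⟨α, hα⟩ => ?_⟩
  obtain ⟨y, -, hy⟩ := exists_mem_cyl_subset hU hα
  have hpos : 0 < μ (Cyl y) := by
    rw [hμ.measure_cyl]
    exact ENNReal.zpow_pos two_ne_zero ENNReal.ofNat_ne_top _
  exact (hpos.trans_le (measure_mono hy)).ne'

theorem denseRange_of_measurePreserving {X Y : Type*} [MeasurableSpace X] [MeasurableSpace Y]
    [TopologicalSpace Y] [OpensMeasurableSpace Y] {μ : Measure X} {ν : Measure Y}
    [ν.IsOpenPosMeasure] {f : X → Y} (hf : MeasurePreserving f μ ν) : DenseRange f := by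
  refine dense_iff_inter_open.2 fun U hU hne => ?_
  have hpre : μ (f ⁻¹' U) ≠ 0 := by
    rw [hf.measure_preimage hU.nullMeasurableSet]
    exact hU.measure_ne_zero ν hne
  obtain ⟨a, ha⟩ := nonempty_of_measure_ne_zero hpre
  exact ⟨f a, ha, mem_range_self a⟩

end Measure

theorem stmt11_general {ν μ : Measure (ℕ → Bool)} (hμ : IsFairCoin μ)
    {T : (ℕ → Bool) → ℕ → Bool} (hc : Continuous T) (hT : MeasurePreserving T ν μ) :
    IsCodingFunction (minCode T) ∧
    (∀ x, T ⁻¹' Cyl x = ⋃ y ∈ minCode T x, Cyl y) ∧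
    (∀ x P, T ⁻¹' Cyl x = ⋃ y ∈ P, Cyl y → CodeLE (minCode T x) P) ∧
    (∀ x, ν (⋃ y ∈ minCode T x, Cyl y) = 2 ^ (-(x.length : ℤ))) ∧
    (∀ P, IsPrefixCode P → IsExhaustiveCode P →
      IsPrefixCode (⋃ x ∈ P, minCode T x) ∧ IsExhaustiveCode (⋃ x ∈ P, minCode T x)) ∧
    ∀ C : List Bool → Set (List Bool), (∀ x, IsPrefixCode (C x)) →
      (∀ x, T ⁻¹' Cyl x = ⋃ y ∈ C x, Cyl y) →
      (∀ x Q, IsPrefixCode Q → T ⁻¹' Cyl x = ⋃ y ∈ Q, Cyl y → CodeLE (C x) Q) →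
      C = minCode T := by
  have := hμ.isOpenPosMeasure
  have hd : DenseRange T := denseRange_of_measurePreserving hT
  refine ⟨isCodingFunction_minCode hc hd, fun x => (iUnion_cyl_minCode hc x).symm,
    fun x P hcov => codeLE_minimalWords hcov.ge, fun x => ?_,
    fun P hP hE =>
      ⟨isPrefixCode_biUnion_minCode hc hd hP, isExhaustiveCode_biUnion_minCode hc hE⟩,
    fun C hC hcov hmin => funext fun x => eq_minimalWords_of_codeLE (hC x) (hcov x) (hmin x)⟩
  rw [iUnion_cyl_minCode hc, hT.measure_preimage (isOpen_cyl x).nullMeasurableSet, hμ.measure_cyl]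

/-- For a continuous tossing process `T`, the assignment `x ↦ minCode T x` is the unique
coding function `P` such that (i) `T⁻¹ I_x = ⋃_{y ∈ P x} I_y`, (ii) each `P x` is
`⪯`-minimal among prefix codes with property (i), and (iii) `μ (⋃_{y ∈ P x} I_y) = 2^(-|x|)`;
moreover it is exhaustive. -/
theorem stmt11 (μ : Measure (ℕ → Bool)) (hμ : IsFairCoin μ)
    (T : (ℕ → Bool) → ℕ → Bool) (hc : Continuous T) (hm : Measurable T)
    (hmp : ∀ A : Set (ℕ → Bool), MeasurableSet A → μ (T ⁻¹' A) = μ A) :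
    IsCodingFunction (minCode T) ∧
    (∀ x : List Bool, T ⁻¹' Cyl x = ⋃ y ∈ minCode T x, Cyl y) ∧
    (∀ x : List Bool, ∀ P' : Set (List Bool), IsPrefixCode P' →
      T ⁻¹' Cyl x = ⋃ y ∈ P', Cyl y → CodeLE (minCode T x) P') ∧
    (∀ x : List Bool, μ (⋃ y ∈ minCode T x, Cyl y) = 2 ^ (-(x.length : ℤ))) ∧
    (∀ P : Set (List Bool), IsPrefixCode P → IsExhaustiveCode P →
      IsPrefixCode (⋃ x ∈ P, minCode T x) ∧ IsExhaustiveCode (⋃ x ∈ P, minCode T x)) ∧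
    ∀ P' : List Bool → Set (List Bool),
      IsCodingFunction P' →
      (∀ x : List Bool, T ⁻¹' Cyl x = ⋃ y ∈ P' x, Cyl y) →
      (∀ x : List Bool, ∀ Q : Set (List Bool), IsPrefixCode Q →
        T ⁻¹' Cyl x = ⋃ y ∈ Q, Cyl y → CodeLE (P' x) Q) →
      (∀ x : List Bool, μ (⋃ y ∈ P' x, Cyl y) = 2 ^ (-(x.length : ℤ))) →
      P' = minCode T := by
  have hT : MeasurePreserving T μ μ :=
    ⟨hm, Measure.ext fun A hA => by rw [Measure.map_apply hm hA, hmp A hA]⟩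
  obtain ⟨hcoding, hcover, hleast, hmeasure, hexhaustive, hunique⟩ := stmt11_general hμ hc hT
  exact ⟨hcoding, hcover, fun x P' _ => hleast x P', hmeasure, hexhaustive,
    fun P' hP' hcov hmin _ => hunique P' hP'.1 hcov hmin⟩
end

section
/- Let t : List Bool → ℕ be a labeled binary tree with no repetition of labels along any path: if x is a proper prefix of y then t(x) ≠ t(y). Then there exists a unique function T : (ℕ → Bool) → (ℕ → Bool) satisfying, for all α and n, (T α) n = α (t [T α 0, T α 1, …, T α (n−1)]) (where the argument of t is the list of the first n output bits). Moreover this T is a tossing process: it is measurable and μ(T⁻¹(A)) = μ(A) for every measurable set A. -/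
open MeasureTheory

/-!
A tree process satisfies the fixed-point equation `T α = α ∘ ℓ (T α)`, where `ℓ b` is the sequence
of labels along the infinite branch `b`. Since `ℓ b n` depends only on `b 0, …, b (n - 1)`, this is
a recursion for `T α`, and `T α` agrees with `b` up to time `n` exactly when `α ∘ ℓ b` does. On each
cylinder `T` can thus be replaced by the reindexing `α ↦ α ∘ ℓ b`, which depends on the cylinder but
is always along an injection, because labels do not repeat. A law that is carried to `ρ` by every
injective reindexing, such as a product of identical factors, is therefore carried to `ρ` by `T`.
-/

theorem measure_eq_of_forall_cylinder {X : ℕ → Type*} [∀ n, MeasurableSpace (X n)]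
    [∀ n, Countable (X n)] [∀ n, MeasurableSingletonClass (X n)] {μ ν : Measure (∀ n, X n)}
    [IsFiniteMeasure ν] (h : ∀ b n, μ (PiNat.cylinder b n) = ν (PiNat.cylinder b n)) :
    μ = ν := by
  have marginals : IsProjectiveMeasureFamily fun J => ν.map J.restrict := fun I _ hJI =>
    (Measure.map_map (Finset.measurable_restrict₂ hJI) (Finset.measurable_restrict I)).symm
  suffices marginals_eq : ∀ n, μ.map (Preorder.frestrictLe n) = ν.map (Preorder.frestrictLe n) from
    ((isProjectiveLimit_nat_iff marginals μ).2 marginals_eq).unique fun _ => rfl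
  refine fun n => Measure.ext_of_singleton fun x => ?_
  have hn := Preorder.measurable_frestrictLe (X := X) n
  rw [Measure.map_apply hn (measurableSet_singleton x),
    Measure.map_apply hn (measurableSet_singleton x)]
  by_cases hx : x ∈ Set.range (Preorder.frestrictLe n)
  · obtain ⟨b, rfl⟩ := hx
    have fiber : Preorder.frestrictLe n ⁻¹' {Preorder.frestrictLe n b} =
        PiNat.cylinder b (n + 1) := by
      ext α
      simp [PiNat.cylinder, funext_iff]
    rw [fiber, h]
  · simp only [Set.preimage_singleton_eq_empty.2 hx, measure_empty]

open ProbabilityTheory in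
theorem measurePreserving_infinitePi_comp {ι κ : Type*} {X : ι → Type*}
    [∀ i, MeasurableSpace (X i)] (μ : ∀ i, Measure (X i)) [∀ i, IsProbabilityMeasure (μ i)]
    {p : κ → ι} (hp : p.Injective) :
    MeasurePreserving (fun (α : ∀ i, X i) k => α (p k)) (Measure.infinitePi μ)
      (Measure.infinitePi fun k => μ (p k)) where
  measurable := by fun_prop
  map_eq := by
    have indep : iIndepFun (fun k (α : ∀ i, X i) => α (p k)) (Measure.infinitePi μ) :=
      (iIndepFun_infinitePi (X := fun _ => id) fun _ => measurable_id).precomp hp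
    rw [indep.map_fun_eq_infinitePi_map fun k => measurable_pi_apply (p k)]
    simp only [Measure.infinitePi_map_eval]

section Tree

variable {X ι : Type*}

/-- The label at depth `n` on the infinite branch `b` of the tree `t`. Nodes are the lists of
edges leading to them from the root, listed from the root down. -/
def branchLabel (t : List X → ι) (b : ℕ → X) (n : ℕ) : ι :=
  t (List.ofFn fun i : Fin n => b i)

/-- `T` is the tree process of `t`: the `n`-th output is the input coordinate named by the node
that the first `n` outputs lead to. Outputs range over an arbitrary alphabet `X` and coordinates
over an arbitrary index type `ι`. -/
def IsTreeProcess (t : List X → ι) (T : (ι → X) → ℕ → X) : Prop :=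
  ∀ α n, T α n = α (branchLabel t (T α) n)

/-- The tree process of `t`, by well-founded recursion on the output index. -/
def treeProcess (t : List X → ι) (α : ι → X) (n : ℕ) : X :=
  α (t (List.ofFn fun i : Fin n => treeProcess t α i))
termination_by n
decreasing_by exact i.isLt

theorem branchLabel_congr (t : List X → ι) {b c : ℕ → X} {n : ℕ} (h : ∀ i < n, b i = c i) :
    branchLabel t b n = branchLabel t c n :=
  congrArg (fun v : Fin n → X => t (List.ofFn v)) (funext fun i => h i i.isLt)

theorem isTreeProcess_treeProcess (t : List X → ι) : IsTreeProcess t (treeProcess t) :=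
  fun α n => treeProcess.eq_1 t α n

theorem existsUnique_isTreeProcess (t : List X → ι) : ∃! T, IsTreeProcess t T := by
  refine ⟨treeProcess t, isTreeProcess_treeProcess t, fun T hT => ?_⟩
  funext α n
  induction n using Nat.strong_induction_on with
  | _ n ih => rw [hT, isTreeProcess_treeProcess t α n, branchLabel_congr t ih]

theorem ofFn_prefix_ofFn (b : ℕ → X) {m n : ℕ} (h : m ≤ n) :
    (List.ofFn fun i : Fin m => b i) <+: List.ofFn fun i : Fin n => b i := by
  obtain ⟨k, rfl⟩ := Nat.exists_eq_add_of_le h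
  exact ⟨_, (List.ofFn_add (f := fun i : Fin (m + k) => b i)).symm⟩

theorem branchLabel_injective {t : List X → ι}
    (ht : ∀ x y : List X, x <+: y → x ≠ y → t x ≠ t y) (b : ℕ → X) :
    (branchLabel t b).Injective := by
  refine .of_lt_imp_ne fun m n hmn => ht _ _ (ofFn_prefix_ofFn b hmn.le) fun heq => hmn.ne ?_
  simpa only [List.length_ofFn] using congrArg List.length heq

namespace IsTreeProcess

variable {t : List X → ι} {T : (ι → X) → ℕ → X}

theorem mem_cylinder_iff (hT : IsTreeProcess t T) (b : ℕ → X) (α : ι → X) (n : ℕ) :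
    T α ∈ PiNat.cylinder b n ↔ α ∘ branchLabel t b ∈ PiNat.cylinder b n := by
  induction n with
  | zero => simp only [PiNat.cylinder_zero, Set.mem_univ]
  | succ n ih =>
    simp only [PiNat.cylinder, Set.mem_ofPred_eq, Nat.forall_lt_succ_right] at ih ⊢
    rw [← ih]
    refine and_congr_right fun agree => ?_
    rw [hT, branchLabel_congr t agree, Function.comp_apply]

variable [MeasurableSpace X] [Countable X] [MeasurableSingletonClass X]

theorem measurable (hT : IsTreeProcess t T) : Measurable T := by
  refine measurable_pi_iff.2 fun n => ?_
  induction n using Nat.strong_induction_on with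
  | _ n ih =>
    have read : Measurable fun q : (ι → X) × (Fin n → X) => q.1 (t (List.ofFn q.2)) :=
      measurable_from_prod_countable_left fun v => measurable_pi_apply (t (List.ofFn v))
    have outputs : Measurable fun α (i : Fin n) => T α i :=
      measurable_pi_iff.2 fun i => ih i i.isLt
    simp only [hT _ n, branchLabel]
    exact read.comp (measurable_id.prodMk outputs)

theorem measurePreserving (hT : IsTreeProcess t T)
    (ht : ∀ x y : List X, x <+: y → x ≠ y → t x ≠ t y)
    {μ : Measure (ι → X)} {ρ : Measure (ℕ → X)} [IsFiniteMeasure ρ]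
    (hμρ : ∀ p : ℕ → ι, p.Injective → MeasurePreserving (fun α => α ∘ p) μ ρ) :
    MeasurePreserving T μ ρ where
  measurable := hT.measurable
  map_eq := by
    refine measure_eq_of_forall_cylinder fun b n => ?_
    have hC : MeasurableSet (PiNat.cylinder b n) := by
      rw [PiNat.cylinder_eq_pi]
      exact .pi (Finset.countable_toSet _) fun i _ => measurableSet_singleton (b i)
    calc μ.map T (PiNat.cylinder b n)
        = μ (T ⁻¹' PiNat.cylinder b n) := Measure.map_apply hT.measurable hC
      _ = μ ((fun α => α ∘ branchLabel t b) ⁻¹' PiNat.cylinder b n) :=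
        congrArg μ (Set.ext fun α => hT.mem_cylinder_iff b α n)
      _ = ρ (PiNat.cylinder b n) :=
        (hμρ _ (branchLabel_injective ht b)).measure_preimage hC.nullMeasurableSet

end IsTreeProcess

theorem stmt13_general [MeasurableSpace X] [Countable X] [MeasurableSingletonClass X]
    (μ : Measure (ι → X)) (ρ : Measure (ℕ → X)) [IsFiniteMeasure ρ]
    (hμρ : ∀ p : ℕ → ι, p.Injective → MeasurePreserving (fun α => α ∘ p) μ ρ)
    (t : List X → ι) (ht : ∀ x y : List X, x <+: y → x ≠ y → t x ≠ t y) :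
    (∃! T, IsTreeProcess t T) ∧ ∀ T, IsTreeProcess t T → MeasurePreserving T μ ρ :=
  ⟨existsUnique_isTreeProcess t, fun _ hT => hT.measurePreserving ht hμρ⟩

end Tree

instance inst_s13 : IsProbabilityMeasure coin :=
  PMF.toMeasure.isProbabilityMeasure _

namespace IsFairCoin

variable {μ : Measure (ℕ → Bool)}

theorem eq_infinitePi (hμ : IsFairCoin μ) : μ = Measure.infinitePi fun _ => coin :=
  IsProjectiveLimit.unique hμ (Measure.isProjectiveLimit_infinitePi _)

theorem isProbabilityMeasure (hμ : IsFairCoin μ) : IsProbabilityMeasure μ :=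
  IsProjectiveLimit.isProbabilityMeasure hμ

theorem measurePreserving_comp (hμ : IsFairCoin μ) {p : ℕ → ℕ} (hp : p.Injective) :
    MeasurePreserving (fun α => α ∘ p) μ μ := by
  rw [hμ.eq_infinitePi]
  exact measurePreserving_infinitePi_comp _ hp

end IsFairCoin

/-- For a labeled tree `t : List Bool → ℕ` with no repeated labels along any path, there
is a unique map `T` on Cantor space with `(T α) n = α (t [T α 0, …, T α (n-1)])`;
moreover any such `T` is a tossing process (measurable and measure-preserving for the
fair-coin measure). -/
theorem stmt13 (μ : Measure (ℕ → Bool)) (hμ : IsFairCoin μ)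
    (t : List Bool → ℕ) (ht : ∀ x y : List Bool, x <+: y → x ≠ y → t x ≠ t y) :
    (∃! T : (ℕ → Bool) → ℕ → Bool,
      ∀ (α : ℕ → Bool) (n : ℕ), T α n = α (t (List.ofFn fun i : Fin n => T α i.1))) ∧
    ∀ T : (ℕ → Bool) → ℕ → Bool,
      (∀ (α : ℕ → Bool) (n : ℕ), T α n = α (t (List.ofFn fun i : Fin n => T α i.1))) →
      Measurable T ∧ ∀ A : Set (ℕ → Bool), MeasurableSet A → μ (T ⁻¹' A) = μ A := by
  have := hμ.isProbabilityMeasure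
  exact (stmt13_general μ μ (fun _ => hμ.measurePreserving_comp) t ht).imp_right fun h T hT =>
    ⟨(h T hT).measurable, fun _ hA => (h T hT).measure_preimage hA.nullMeasurableSet⟩
end
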